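/- arXiv:0704.1696 — 2 statements merged into one kernel-verified Lean document; each statement's English description precedes it below -/
import Mathlib

section
/- Let μ be an atomless probability measure on ℝ^d with compact support (so in particular its support is infinite). Then for every n, any point m★_n ∈ (ℝ^d)^n at which the distortion V_n attains its global minimum over (ℝ^d)^n has pairwise distinct components: m★_{n,i} ≠ m★_{n,j} whenever i ≠ j. -/
open MeasureTheory Set Filter Topology
open scoped Classical ENNReal

noncomputable section

/-- The distortion `V_n(m) = (1/2) ∫ min_i ‖m_i - x‖² dμ(x)`. -/
def distortion {d n : ℕ} (μ : Measure (EuclideanSpace ℝ (Fin d)))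
    (m : Fin n → EuclideanSpace ℝ (Fin d)) : ℝ :=
  (1 / 2) * ∫ x, (⨅ i, ‖m i - x‖ ^ 2) ∂μ

/-!
If two components of `m` coincide, one of them can be moved to an arbitrary point `y` while its
twin keeps serving the old location, so the integrand at `x` becomes the minimum of the old one and
the cost of serving `x` from `y`. Since `μ` charges the complement of the finite set of values of
`m`, some such `y` has the property that all its neighbourhoods have positive mass, and on a small
one of them the integrand drops strictly. Hence `m` is not a minimizer.
-/

section FiniteInfimum

variable {ι α : Type*} [Finite ι]

theorem iInf_update_of_apply_eq [DecidableEq ι] [ConditionallyCompleteLattice α] {f : ι → α}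
    {i j : ι} (hij : i ≠ j) (hf : f i = f j) (a : α) :
    ⨅ k, Function.update f j a k = a ⊓ ⨅ k, f k := by
  have : Nonempty ι := ⟨i⟩
  have bddBelow (g : ι → α) : BddBelow (range g) := (finite_range g).bddBelow
  refine le_antisymm (le_inf ?_ (le_ciInf fun k ↦ ?_)) (le_ciInf fun k ↦ ?_)
  · exact (ciInf_le (bddBelow _) j).trans_eq (Function.update_self ..)
  · rcases eq_or_ne k j with rfl | hk
    · exact (ciInf_le (bddBelow _) i).trans_eq (by rw [Function.update_of_ne hij, hf])
    · exact (ciInf_le (bddBelow _) k).trans_eq (Function.update_of_ne hk ..)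
  · rcases eq_or_ne k j with rfl | hk
    · exact inf_le_left.trans_eq (Function.update_self k a f).symm
    · exact (inf_le_right.trans (ciInf_le (bddBelow f) k)).trans_eq
        (Function.update_of_ne hk ..).symm

theorem integrable_iInf [Nonempty ι] [MeasurableSpace α] {μ : Measure α} {f : ι → α → ℝ}
    (hf : ∀ i, Integrable (f i) μ) : Integrable (fun x ↦ ⨅ i, f i x) μ := by
  cases nonempty_fintype ι
  have hinf : Integrable (Finset.univ.inf' Finset.univ_nonempty f) μ :=
    Finset.inf'_induction (p := (Integrable · μ)) _ _ (fun _ hg _ hh ↦ hg.inf hh) fun i _ ↦ hf i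
  simpa only [← Finset.inf'_univ_eq_ciInf, ← Finset.inf'_apply] using hinf

end FiniteInfimum

section Measure

variable {α : Type*} [MeasurableSpace α] {μ : Measure α}

theorem integral_inf_lt_integral_right {f g : α → ℝ} (hf : Integrable f μ) (hg : Integrable g μ)
    (hlt : 0 < μ {x | f x < g x}) : ∫ x, f x ⊓ g x ∂μ < ∫ x, g x ∂μ := by
  have hinf : Integrable (fun x ↦ f x ⊓ g x) μ := hf.inf hg
  rw [← sub_pos, ← integral_sub hg hinf, integral_pos_iff_support_of_nonneg
    (fun x ↦ sub_nonneg.2 inf_le_right) (hg.sub hinf)]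
  exact hlt.trans_le <| measure_mono fun x (hx : f x < g x) ↦
    (sub_pos.2 (inf_le_left.trans_lt hx)).ne'

theorem measure_compl_ne_zero_of_measure_eq_zero [NeZero μ] {s : Set α} (hs : μ s = 0) :
    μ sᶜ ≠ 0 := by
  intro hsc
  have huniv : μ univ = 0 := union_compl_self s ▸ measure_union_null hs hsc
  exact NeZero.ne μ (Measure.measure_univ_eq_zero.1 huniv)

theorem integrable_of_isCompact_of_measure_compl_eq_zero [TopologicalSpace α]
    [OpensMeasurableSpace α] [T2Space α] [IsFiniteMeasureOnCompacts μ] {K : Set α}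
    (hK : IsCompact K) (hμK : μ Kᶜ = 0) {f : α → ℝ} (hf : Continuous f) : Integrable f μ := by
  have hrestrict : μ.restrict K = μ := Measure.restrict_eq_self_of_ae_mem hμK
  simpa only [IntegrableOn, hrestrict] using hf.continuousOn.integrableOn_compact (μ := μ) hK

end Measure

section PowerDistortion

variable {E ι : Type*} [MeasurableSpace E] {μ : Measure E} {r : ℝ} {m : ι → E}

/-- The distortion of order `r` of the quantizer `m`, for points of a metric space, without a
normalizing factor: `distortion` is half of it for `r = 2`. -/
def powerDistortion [PseudoMetricSpace E] (μ : Measure E) (r : ℝ) (m : ι → E) : ℝ :=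
  ∫ x, ⨅ i, dist (m i) x ^ r ∂μ

theorem distortion_eq_half_mul_powerDistortion {d n : ℕ}
    (μ : Measure (EuclideanSpace ℝ (Fin d))) (m : Fin n → EuclideanSpace ℝ (Fin d)) :
    distortion μ m = 1 / 2 * powerDistortion μ 2 m := by
  simp only [distortion, powerDistortion, dist_eq_norm, Real.rpow_two]

theorem powerDistortion_update_lt [PseudoMetricSpace E] [DecidableEq ι] [Finite ι]
    (hr : 0 < r) (hint : ∀ c, Integrable (fun x ↦ dist c x ^ r) μ) {i j : ι} (hij : i ≠ j)
    (hm : m i = m j) {y : E} (hy : 0 < μ {x | ∀ k, dist y x < dist (m k) x}) :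
    powerDistortion μ r (Function.update m j y) < powerDistortion μ r m := by
  have : Nonempty ι := ⟨i⟩
  have hinf (x : E) : ⨅ k, dist (Function.update m j y k) x ^ r =
      dist y x ^ r ⊓ ⨅ k, dist (m k) x ^ r := by
    simp only [Function.apply_update (fun _ c ↦ dist c x ^ r)]
    exact iInf_update_of_apply_eq hij (by rw [hm]) _
  simp only [powerDistortion, hinf]
  refine integral_inf_lt_integral_right (hint y) (integrable_iInf fun k ↦ hint (m k)) ?_
  refine hy.trans_le <| measure_mono fun x hx ↦ ?_
  obtain ⟨k, hk⟩ := exists_eq_ciInf_of_finite (f := fun k ↦ dist (m k) x ^ r)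
  exact (Real.rpow_lt_rpow dist_nonneg (hx k) hr).trans_eq hk

theorem exists_measure_forall_dist_lt_pos [MetricSpace E] [SecondCountableTopology E]
    [Finite ι] (hm : μ (range m)ᶜ ≠ 0) : ∃ y, 0 < μ {x | ∀ k, dist y x < dist (m k) x} := by
  obtain ⟨y, hy, hpos⟩ := exists_mem_forall_mem_nhdsWithin_pos_measure hm
  refine ⟨y, hpos _ (mem_nhdsWithin_of_mem_nhds ?_)⟩
  refine eventually_all.2 fun k ↦ (isOpen_lt (by fun_prop) (by fun_prop)).mem_nhds ?_
  simpa using fun hk : m k = y ↦ hy ⟨k, hk⟩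

theorem distortion_minimizer_pairwise_distinct_general [MetricSpace E]
    [SecondCountableTopology E] [Fintype ι] (hr : 0 < r)
    (hμ : ∀ s : Finset E, s.card < Fintype.card ι → μ (s : Set E)ᶜ ≠ 0)
    (hint : ∀ c, Integrable (fun x ↦ dist c x ^ r) μ)
    (hmin : ∀ m' : ι → E, powerDistortion μ r m ≤ powerDistortion μ r m') :
    Function.Injective m := by
  by_contra hinj
  have hcard : (Finset.univ.image m).card < Fintype.card ι :=
    Finset.card_image_le.lt_of_ne fun h ↦ hinj <| by simpa using Finset.card_image_iff.1 h
  obtain ⟨y, hy⟩ := exists_measure_forall_dist_lt_pos (by simpa using hμ _ hcard)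
  obtain ⟨i, j, hm, hij⟩ := Function.not_injective_iff.1 hinj
  exact (powerDistortion_update_lt hr hint hij hm hy).not_ge (hmin _)

end PowerDistortion

/-- For an atomless, compactly supported probability measure
`μ`, every global minimizer of the distortion has pairwise distinct
components. -/
theorem distortion_minimizer_pairwise_distinct {d n : ℕ} (hd : 1 ≤ d)
    (μ : Measure (EuclideanSpace ℝ (Fin d))) [IsProbabilityMeasure μ]
    (hatomless : ∀ x, μ {x} = 0)
    (hcomp : ∃ K, IsCompact K ∧ μ Kᶜ = 0)
    (mstar : Fin n → EuclideanSpace ℝ (Fin d))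
    (hmin : ∀ m : Fin n → EuclideanSpace ℝ (Fin d),
      distortion μ mstar ≤ distortion μ m) :
    ∀ i j : Fin n, i ≠ j → mstar i ≠ mstar j := by
  obtain ⟨K, hK, hμK⟩ := hcomp
  have : NullSingletonClass μ := ⟨hatomless⟩
  have hsecond_moment (c) : Integrable (fun x ↦ dist c x ^ (2 : ℝ)) μ :=
    integrable_of_isCompact_of_measure_compl_eq_zero hK hμK <| by
      simp only [Real.rpow_two]; fun_prop
  have hmin' (m : Fin n → EuclideanSpace ℝ (Fin d)) :
      powerDistortion μ 2 mstar ≤ powerDistortion μ 2 m := by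
    simpa [distortion_eq_half_mul_powerDistortion] using hmin m
  exact fun i j ↦ (distortion_minimizer_pairwise_distinct_general two_pos
    (fun s _ ↦ measure_compl_ne_zero_of_measure_eq_zero (s.measure_zero μ)) hsecond_moment hmin').ne

end
end

section
/- Let μ be a probability measure on ℝ^d with compact support and density f. For each n, let m★_n = (m★_{n,1},…,m★_{n,n}) ∈ (ℝ^d)^n be a global minimizer of the distortion V_n, and define the weighted empirical measure μ_n = Σ_{i=1}^n μ(C_i(m★_n)) · δ_{m★_{n,i}}, where the Voronoi cells C_i(m★_n) are made into a partition by assigning boundary points to the smallest winning index. Then μ_n converges weakly (in distribution) to μ as n → ∞. -/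
/-!
Since `μ_n` is the law of the nearest-point map `q_n` under `μ`, and
`V_n(m★_n) = (1/2) ∫ ‖q_n(x) - x‖² dμ(x)`, it is enough that the optimal distortion tends to `0`:
then `q_n` tends to the identity in `L²(μ)`, hence in probability, hence in distribution. By
optimality, `V_n(m★_n)` is at most the distortion of the first `n` terms of a dense sequence, which
tends to `0` by dominated convergence.
-/

open MeasureTheory Set Filter Topology
open scoped Classical ENNReal

noncomputable section

/-- The tie-broken Voronoi cell: `x ∈ cellP m i` iff `i` is the smallest index
minimizing `‖x - m j‖`; these cells partition `ℝ^d`. -/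
def cellP {d n : ℕ} (m : Fin n → EuclideanSpace ℝ (Fin d)) (i : Fin n) :
    Set (EuclideanSpace ℝ (Fin d)) :=
  {x | (∀ j, ‖x - m i‖ ≤ ‖x - m j‖) ∧ ∀ j, j < i → ∃ k, ‖x - m k‖ < ‖x - m j‖}

/-- The weighted empirical measure `μ_n = Σ_i μ(C_i(m)) δ_{m_i}`. -/
def weightedEmpirical {d n : ℕ} (μ : Measure (EuclideanSpace ℝ (Fin d)))
    (m : Fin n → EuclideanSpace ℝ (Fin d)) :
    Measure (EuclideanSpace ℝ (Fin d)) :=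
  ∑ i : Fin n, μ (cellP m i) • Measure.dirac (m i)

section Voronoi

variable {d n : ℕ} {m : Fin n → EuclideanSpace ℝ (Fin d)} {x : EuclideanSpace ℝ (Fin d)}
  {i j : Fin n}

theorem measurableSet_cellP (m : Fin n → EuclideanSpace ℝ (Fin d)) (i : Fin n) :
    MeasurableSet (cellP m i) := by
  simp only [cellP, measurableSet_setOfPred]
  fun_prop

theorem le_of_mem_cellP (hi : x ∈ cellP m i) (hj : x ∈ cellP m j) : i ≤ j :=
  not_lt.1 fun hji ↦
    let ⟨k, hk⟩ := hi.2 j hji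
    (hj.1 k).not_gt hk

theorem exists_mem_cellP [NeZero n] (m : Fin n → EuclideanSpace ℝ (Fin d))
    (x : EuclideanSpace ℝ (Fin d)) : ∃ i, x ∈ cellP m i := by
  obtain ⟨i, hi, hfirst⟩ := WellFounded.has_min wellFounded_lt
    {i | ∀ j, ‖x - m i‖ ≤ ‖x - m j‖} (Finite.exists_min fun i ↦ ‖x - m i‖)
  refine ⟨i, hi, fun j hj ↦ ?_⟩
  by_contra! hmin
  exact hfirst j hmin hj

/-- The index of the tie-broken Voronoi cell containing `x`, i.e. the smallest index of a point of
`m` nearest to `x`. -/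
def voronoiIndex [NeZero n] (m : Fin n → EuclideanSpace ℝ (Fin d))
    (x : EuclideanSpace ℝ (Fin d)) : Fin n :=
  (exists_mem_cellP m x).choose

/-- The nearest-point projection onto the points of `m`, ties being broken by the smallest
index. -/
def voronoiQuantizer [NeZero n] (m : Fin n → EuclideanSpace ℝ (Fin d))
    (x : EuclideanSpace ℝ (Fin d)) : EuclideanSpace ℝ (Fin d) :=
  m (voronoiIndex m x)

variable [NeZero n]

theorem mem_cellP_iff_voronoiIndex_eq : x ∈ cellP m i ↔ voronoiIndex m x = i := by
  have hmem : x ∈ cellP m (voronoiIndex m x) := (exists_mem_cellP m x).choose_spec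
  exact ⟨fun hi ↦ (le_of_mem_cellP hmem hi).antisymm (le_of_mem_cellP hi hmem), fun h ↦ h ▸ hmem⟩

theorem voronoiIndex_preimage_singleton (m : Fin n → EuclideanSpace ℝ (Fin d)) (i : Fin n) :
    voronoiIndex m ⁻¹' {i} = cellP m i :=
  Set.ext fun _ ↦ mem_cellP_iff_voronoiIndex_eq.symm

theorem measurable_voronoiIndex (m : Fin n → EuclideanSpace ℝ (Fin d)) :
    Measurable (voronoiIndex m) :=
  measurable_to_countable' fun i ↦
    voronoiIndex_preimage_singleton m i ▸ measurableSet_cellP m i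

theorem measurable_voronoiQuantizer (m : Fin n → EuclideanSpace ℝ (Fin d)) :
    Measurable (voronoiQuantizer m) :=
  (measurable_of_finite m).comp (measurable_voronoiIndex m)

theorem norm_voronoiQuantizer_sub_le (m : Fin n → EuclideanSpace ℝ (Fin d))
    (x : EuclideanSpace ℝ (Fin d)) (i : Fin n) : ‖voronoiQuantizer m x - x‖ ≤ ‖m i - x‖ := by
  rw [norm_sub_rev, norm_sub_rev (m i)]
  exact (mem_cellP_iff_voronoiIndex_eq.2 rfl).1 i

theorem iInf_norm_sub_sq_eq_voronoiQuantizer (m : Fin n → EuclideanSpace ℝ (Fin d))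
    (x : EuclideanSpace ℝ (Fin d)) :
    ⨅ i, ‖m i - x‖ ^ 2 = ‖voronoiQuantizer m x - x‖ ^ 2 :=
  le_antisymm (ciInf_le (finite_range _).bddBelow (voronoiIndex m x))
    (le_ciInf fun i ↦ by gcongr; exact norm_voronoiQuantizer_sub_le m x i)

theorem weightedEmpirical_eq_map (μ : Measure (EuclideanSpace ℝ (Fin d)))
    (m : Fin n → EuclideanSpace ℝ (Fin d)) :
    weightedEmpirical μ m = μ.map (voronoiQuantizer m) := by
  have hm : Measurable m := measurable_of_finite m
  calc weightedEmpirical μ m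
      = Measure.sum fun i ↦ (μ.map (voronoiIndex m) {i} • Measure.dirac i).map m := by
        simp only [weightedEmpirical, Measure.sum_fintype, Measure.map_smul, Measure.map_dirac' hm,
          Measure.map_apply (measurable_voronoiIndex m) (measurableSet_singleton _),
          voronoiIndex_preimage_singleton]
    _ = (μ.map (voronoiIndex m)).map m := by
        rw [← Measure.map_sum hm.aemeasurable, Measure.sum_smul_dirac]
    _ = μ.map (voronoiQuantizer m) := Measure.map_map hm (measurable_voronoiIndex m)

theorem distortion_eq_integral_voronoiQuantizer (μ : Measure (EuclideanSpace ℝ (Fin d)))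
    (m : Fin n → EuclideanSpace ℝ (Fin d)) :
    distortion μ m = (1 / 2) * ∫ x, ‖voronoiQuantizer m x - x‖ ^ 2 ∂μ := by
  simp only [distortion, iInf_norm_sub_sq_eq_voronoiQuantizer]

variable {μ : Measure (EuclideanSpace ℝ (Fin d))}

theorem memLp_voronoiQuantizer [IsFiniteMeasure μ] (m : Fin n → EuclideanSpace ℝ (Fin d))
    (p : ℝ≥0∞) : MemLp (voronoiQuantizer m) p μ := by
  obtain ⟨C, hC⟩ := (finite_range fun i ↦ ‖m i‖).bddAbove
  exact .of_bound (measurable_voronoiQuantizer m).aestronglyMeasurable C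
    (ae_of_all _ fun x ↦ hC (mem_range_self (voronoiIndex m x)))

theorem eLpNorm_voronoiQuantizer_sub_id [IsFiniteMeasure μ] (hμ : MemLp id 2 μ)
    (m : Fin n → EuclideanSpace ℝ (Fin d)) :
    eLpNorm (voronoiQuantizer m - id) 2 μ = ENNReal.ofReal √(2 * distortion μ m) := by
  rw [((memLp_voronoiQuantizer m 2).sub hμ).eLpNorm_eq_integral_rpow_norm (by simp) (by simp),
    distortion_eq_integral_voronoiQuantizer, Real.sqrt_eq_rpow]
  simp

end Voronoi

theorem distortion_nonneg {d n : ℕ} (μ : Measure (EuclideanSpace ℝ (Fin d)))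
    (m : Fin n → EuclideanSpace ℝ (Fin d)) : 0 ≤ distortion μ m :=
  mul_nonneg one_half_pos.le
    (integral_nonneg fun _ ↦ Real.iInf_nonneg fun _ ↦ sq_nonneg _)

theorem tendsto_integral_weightedEmpirical_of_tendsto_distortion {ι : Type*} {l : Filter ι}
    [l.IsCountablyGenerated] [l.NeBot] {d : ℕ} {μ : Measure (EuclideanSpace ℝ (Fin d))}
    [IsProbabilityMeasure μ] (hμ : MemLp id 2 μ) {n : ι → ℕ} [∀ i, NeZero (n i)]
    {m : (i : ι) → Fin (n i) → EuclideanSpace ℝ (Fin d)}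
    (hm : Tendsto (fun i ↦ distortion μ (m i)) l (𝓝 0))
    (g : BoundedContinuousFunction (EuclideanSpace ℝ (Fin d)) ℝ) :
    Tendsto (fun i ↦ ∫ x, g x ∂(weightedEmpirical μ (m i))) l (𝓝 (∫ x, g x ∂μ)) := by
  have hLp : Tendsto (fun i ↦ eLpNorm (voronoiQuantizer (m i) - id) 2 μ) l (𝓝 0) := by
    simp only [eLpNorm_voronoiQuantizer_sub_id hμ]
    simpa using ENNReal.tendsto_ofReal (hm.const_mul 2).sqrt
  have hmeasure : TendstoInMeasure μ (fun i ↦ voronoiQuantizer (m i)) l id :=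
    tendstoInMeasure_of_tendsto_eLpNorm two_ne_zero
      (fun i ↦ (measurable_voronoiQuantizer (m i)).aestronglyMeasurable)
      hμ.aestronglyMeasurable hLp
  have hdistribution := hmeasure.tendstoInDistribution
    fun i ↦ (measurable_voronoiQuantizer (m i)).aemeasurable
  simpa [weightedEmpirical_eq_map] using
    ProbabilityMeasure.tendsto_iff_forall_integral_tendsto.1 hdistribution.tendsto g

theorem tendsto_iInf_norm_sub_sq_of_denseRange {E : Type*} [SeminormedAddCommGroup E]
    {u : ℕ → E} (hu : DenseRange u) (x : E) :
    Tendsto (fun n ↦ ⨅ i : Fin (n + 1), ‖u i - x‖ ^ 2) atTop (𝓝 0) := by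
  refine Metric.tendsto_atTop.2 fun ε hε ↦ ?_
  obtain ⟨N, hN⟩ := hu.exists_dist_lt x (Real.sqrt_pos.2 hε)
  refine ⟨N, fun n hn ↦ ?_⟩
  rw [Real.dist_0_eq_abs, abs_of_nonneg (Real.iInf_nonneg fun _ ↦ sq_nonneg _)]
  calc ⨅ i : Fin (n + 1), ‖u i - x‖ ^ 2
      ≤ ‖u N - x‖ ^ 2 := ciInf_le (finite_range _).bddBelow (⟨N, by lia⟩ : Fin (n + 1))
    _ < ε := by rwa [← Real.lt_sqrt (norm_nonneg _), ← dist_eq_norm, dist_comm]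

theorem tendsto_distortion_of_denseRange {d : ℕ} {μ : Measure (EuclideanSpace ℝ (Fin d))}
    [IsFiniteMeasure μ] (hμ : MemLp id 2 μ) {u : ℕ → EuclideanSpace ℝ (Fin d)}
    (hu : DenseRange u) :
    Tendsto (fun n ↦ distortion μ fun i : Fin (n + 1) ↦ u i) atTop (𝓝 0) := by
  have hbound : Integrable (fun x ↦ ‖u 0 - x‖ ^ 2) μ :=
    ((memLp_const (u 0)).sub hμ).integrable_norm_pow two_ne_zero
  have hint : Tendsto (fun n ↦ ∫ x, (⨅ i : Fin (n + 1), ‖u i - x‖ ^ 2) ∂μ) atTop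
      (𝓝 (∫ _, (0 : ℝ) ∂μ)) := by
    refine tendsto_integral_of_dominated_convergence _
      (fun n ↦ (Measurable.iInf fun i ↦ by fun_prop).aestronglyMeasurable) hbound
      (fun n ↦ ae_of_all _ fun x ↦ ?_)
      (ae_of_all _ (tendsto_iInf_norm_sub_sq_of_denseRange hu))
    rw [Real.norm_of_nonneg (Real.iInf_nonneg fun _ ↦ sq_nonneg _)]
    exact ciInf_le (finite_range _).bddBelow (0 : Fin (n + 1))
  simpa [distortion] using hint.const_mul 2⁻¹

theorem memLp_id_of_isBounded {E : Type*} [NormedAddCommGroup E] [MeasurableSpace E]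
    [OpensMeasurableSpace E] [SecondCountableTopology E] {μ : Measure E} [IsFiniteMeasure μ]
    {p : ℝ≥0∞} {K : Set E} (hK : Bornology.IsBounded K) (hμK : μ Kᶜ = 0) : MemLp id p μ := by
  obtain ⟨C, hC⟩ := hK.exists_norm_le
  have hae : ∀ᵐ x ∂μ, x ∈ K := mem_ae_iff.2 hμK
  exact .of_bound aestronglyMeasurable_id C (hae.mono hC)

theorem weightedEmpirical_tendsto_weakly_general {d : ℕ}
    {μ : Measure (EuclideanSpace ℝ (Fin d))} [IsProbabilityMeasure μ] (hμ : MemLp id 2 μ)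
    {mstar : (n : ℕ) → Fin n → EuclideanSpace ℝ (Fin d)}
    (hmin : ∀ n : ℕ, ∀ m : Fin n → EuclideanSpace ℝ (Fin d),
      distortion μ (mstar n) ≤ distortion μ m) :
    ∀ g : BoundedContinuousFunction (EuclideanSpace ℝ (Fin d)) ℝ,
      Tendsto (fun n : ℕ => ∫ x, g x ∂(weightedEmpirical μ (mstar n))) atTop
        (nhds (∫ x, g x ∂μ)) := by
  intro g
  have hopt : Tendsto (fun n ↦ distortion μ (mstar (n + 1))) atTop (𝓝 0) :=
    squeeze_zero (fun n ↦ distortion_nonneg μ (mstar (n + 1))) (fun n ↦ hmin (n + 1) _)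
      (tendsto_distortion_of_denseRange hμ (TopologicalSpace.denseRange_denseSeq _))
  exact (tendsto_add_atTop_iff_nat 1).1
    (tendsto_integral_weightedEmpirical_of_tendsto_distortion hμ hopt g)

/-- The weighted empirical measures associated with global
minimizers of the distortion converge weakly to `μ` as `n → ∞`. -/
theorem weightedEmpirical_tendsto_weakly {d : ℕ} (hd : 1 ≤ d)
    (μ : Measure (EuclideanSpace ℝ (Fin d))) [IsProbabilityMeasure μ]
    (f : EuclideanSpace ℝ (Fin d) → ℝ) (hf0 : ∀ x, 0 ≤ f x)
    (hdens : μ = volume.withDensity fun x => ENNReal.ofReal (f x))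
    (hcomp : ∃ K, IsCompact K ∧ μ Kᶜ = 0)
    (mstar : (n : ℕ) → Fin n → EuclideanSpace ℝ (Fin d))
    (hmin : ∀ n : ℕ, ∀ m : Fin n → EuclideanSpace ℝ (Fin d),
      distortion μ (mstar n) ≤ distortion μ m) :
    ∀ g : BoundedContinuousFunction (EuclideanSpace ℝ (Fin d)) ℝ,
      Tendsto (fun n : ℕ => ∫ x, g x ∂(weightedEmpirical μ (mstar n))) atTop
        (nhds (∫ x, g x ∂μ)) := by
  obtain ⟨K, hK, hμK⟩ := hcomp
  exact weightedEmpirical_tendsto_weakly_general (memLp_id_of_isBounded hK.isBounded hμK) hmin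

end
end
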